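/- arXiv:1908.09420 — 3 statements merged into one kernel-verified Lean document; each statement's English description precedes it below -/
import Mathlib

section
/- Let N be an odd perfect number with at least three distinct prime divisors, and let a, b, c denote respectively its third largest, second largest, and largest prime divisors. If a² ∥ N, b² ∥ N, and c² ∥ N, then abc < 2^(1/3) · 3^(1/18) · N^(17/36). -/
open ArithmeticFunction in
lemma sigma_one_prime_sq {p : ℕ} (hp : p.Prime) : sigma 1 (p ^ 2) = p ^ 2 + p + 1 := by
  rw [sigma_one_apply_prime_pow hp]
  simp [Finset.sum_range_succ]
  ring

open ArithmeticFunction in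
lemma sigma_one_prime_sq_mul {p m : ℕ} (hp : p.Prime) (hm : ¬ p ∣ m) :
    sigma 1 (p ^ 2 * m) = (p ^ 2 + p + 1) * sigma 1 m := by
  rw [isMultiplicative_sigma.map_mul_of_coprime
    (((Nat.Prime.coprime_iff_not_dvd hp).2 hm).pow_left 2), sigma_one_prime_sq hp]

lemma exists_eq_sq_mul_of_exact {p n : ℕ} (h : p ^ 2 ∣ n ∧ ¬ p ^ 3 ∣ n) :
    ∃ m, n = p ^ 2 * m ∧ ¬ p ∣ m := by
  obtain ⟨⟨m, rfl⟩, h3⟩ := h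
  refine ⟨m, rfl, fun hm => h3 ?_⟩
  rw [pow_succ p 2]
  exact mul_dvd_mul_left _ hm

lemma exact_sq_of_exact_prime_sq_mul {p q m : ℕ} (hp : p.Prime) (hq : q.Prime) (hpq : p ≠ q)
    (h : p ^ 2 ∣ q ^ 2 * m ∧ ¬ p ^ 3 ∣ q ^ 2 * m) : p ^ 2 ∣ m ∧ ¬ p ^ 3 ∣ m :=
  ⟨(((Nat.coprime_primes hp hq).2 hpq).pow 2 2).dvd_of_dvd_mul_left h.1,
    fun h3 => h.2 (h3.mul_left _)⟩

lemma lt_of_card_filter_lt {s : Finset ℕ} {a b : ℕ}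
    (h : (s.filter (fun q => b < q)).card < (s.filter (fun q => a < q)).card) : a < b := by
  by_contra! hba
  refine absurd (Finset.card_le_card ?_) (not_le.2 h)
  exact Finset.monotone_filter_right s fun q _ hq => lt_of_le_of_lt hba hq

/-- A prime square dividing a product of two numbers divides one of them or the prime divides
both. -/
lemma prime_sq_dvd_mul {p x y : ℕ} (hp : p.Prime) (h : p ^ 2 ∣ x * y) :
    p ^ 2 ∣ x ∨ p ^ 2 ∣ y ∨ (p ∣ x ∧ p ∣ y) := by
  by_cases hx : p ∣ x
  · by_cases hy : p ∣ y
    · exact Or.inr (Or.inr ⟨hx, hy⟩)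
    · exact Or.inl
        ((((Nat.Prime.coprime_iff_not_dvd hp).2 hy).pow_left 2).dvd_of_dvd_mul_right h)
  · exact Or.inr (Or.inl
      ((((Nat.Prime.coprime_iff_not_dvd hp).2 hx).pow_left 2).dvd_of_dvd_mul_left h))

lemma not_sq_dvd_sq_add_self_add_one {p x : ℕ} (hx0 : 0 < x) (hx : x < p) :
    ¬ p ^ 2 ∣ x ^ 2 + x + 1 := by
  intro h
  have hle := Nat.le_of_dvd (by positivity) h
  nlinarith

lemma prime_not_dvd_sq_add_self_add_one {p : ℕ} (hp : p.Prime) : ¬ p ∣ p ^ 2 + p + 1 := by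
  intro h
  have : p ∣ p ^ 2 + p := ⟨p + 1, by ring⟩
  exact hp.one_lt.ne' (Nat.dvd_one.1 ((Nat.dvd_add_right this).1 h))

/-- Distinct roots of `x² + x + 1` modulo a prime `c`, both below `c`, sum to `c - 1`. -/
lemma eq_add_add_one_of_dvd {a b c : ℕ} (hc : c.Prime) (hab : a < b) (hbc : b < c)
    (ha : c ∣ a ^ 2 + a + 1) (hb : c ∣ b ^ 2 + b + 1) : c = a + b + 1 := by
  have hmul : c ∣ (b - a) * (a + b + 1) := by
    have h := Nat.dvd_sub hb ha
    obtain ⟨d, rfl⟩ := Nat.exists_eq_add_of_lt hab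
    convert h using 1
    rw [show a + d + 1 - a = d + 1 by omega]
    apply Nat.eq_sub_of_add_eq
    ring
  rcases hc.dvd_mul.1 hmul with h | h
  · have := Nat.le_of_dvd (by omega) h
    omega
  · obtain ⟨k, hk⟩ := h
    have : k < 2 := by nlinarith
    interval_cases k <;> omega

lemma sq_add_self_add_one_ne_three_mul_sq {b c : ℕ} (hc : c.Prime)
    (hb : c ∣ b ^ 2 + b + 1) : c ^ 2 + c + 1 ≠ 3 * b ^ 2 := by
  intro h
  have h13 : (c : ℤ) ∣ 13 := by
    obtain ⟨m, hm⟩ := hb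
    zify at h hm
    exact ⟨3 * (c + 1) - (3 * m - (c + 1)) * (3 * b - 4), by
      linear_combination -(3 * b - 4) * 3 * hm - (3 * b - 4 + 3) * h⟩
  have h13' : c ∣ 13 := by exact_mod_cast h13
  obtain rfl := (Nat.prime_dvd_prime_iff_eq hc (by norm_num)).1 h13'
  have : b < 8 := by nlinarith
  interval_cases b <;> omega

lemma not_sq_dvd_mul_of_eq_add {a b c : ℕ} (hbp : b.Prime) (hcp : c.Prime) (ha : 0 < a)
    (hab : a < b) (hc : c = a + b + 1) (hcb : c ∣ b ^ 2 + b + 1) :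
    ¬ b ^ 2 ∣ (a ^ 2 + a + 1) * (c ^ 2 + c + 1) := by
  intro h
  rcases prime_sq_dvd_mul hbp h with h | ⟨k, hk⟩ | ⟨h1, h2⟩
  · exact not_sq_dvd_sq_add_self_add_one ha hab h
  · have hb2 := hbp.two_le
    have hc2 : c < 2 * b := by
      refine lt_of_le_of_ne (by omega) fun h2 => ?_
      exact Nat.not_prime_mul (by norm_num) hbp.ne_one (h2 ▸ hcp)
    have hk4 : k < 4 := by
      by_contra! hk4
      have : b ^ 2 * 4 ≤ b ^ 2 * k := Nat.mul_le_mul_left _ hk4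
      nlinarith
    have hpar : Even (c ^ 2 + c) := by
      rw [show c ^ 2 + c = c * (c + 1) by ring]
      exact Nat.even_mul_succ_self c
    obtain ⟨r, hr⟩ := hpar
    interval_cases k
    · omega
    · nlinarith
    · omega
    · exact sq_add_self_add_one_ne_three_mul_sq hcp hcb (by rw [hk]; ring)
  · have hbodd : b ≠ 2 := by
      rintro rfl
      interval_cases a
      omega
    have h3 : b ∣ 2 * (a + 1) := by
      have hsum : c ^ 2 + c + 1 = (a ^ 2 + a + 1 + b * (2 * a + b + 3)) + 2 * (a + 1) := by
        rw [hc]; ring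
      rw [hsum] at h2
      exact (Nat.dvd_add_right (h1.add (Dvd.intro _ rfl))).1 h2
    rcases hbp.dvd_mul.1 h3 with h4 | h4
    · exact hbodd ((Nat.prime_dvd_prime_iff_eq hbp Nat.prime_two).1 h4)
    · have hab1 : b = a + 1 := le_antisymm (Nat.le_of_dvd (by omega) h4) hab
      have h5 : b ∣ a ^ 2 + a := ⟨a, by rw [hab1]; ring⟩
      exact hbp.ne_one (Nat.dvd_one.1 ((Nat.dvd_add_right h5).1 h1))

/-- If `(abc)² M` is perfect with `M` coprime to `abc`, then `abc` is bounded in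
terms of the cofactor `M`; here `s` plays the role of `σ(M)`. -/
lemma mul_mul_lt_of_sigma_eq {a b c M s : ℕ} (hap : a.Prime) (hbp : b.Prime) (hcp : c.Prime)
    (hab : a < b) (hbc : b < c) (hM : 0 < M)
    (h : (a ^ 2 + a + 1) * ((b ^ 2 + b + 1) * ((c ^ 2 + c + 1) * s)) =
      2 * (a ^ 2 * (b ^ 2 * (c ^ 2 * M)))) :
    a * b * c < 16 * M ^ 3 := by
  have ha0 := hap.pos
  have hb0 := hbp.pos
  have hc0 := hcp.pos
  have hs0 : 0 < s := by
    rcases Nat.eq_zero_or_pos s with rfl | hs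
    · have : 0 < 2 * (a ^ 2 * (b ^ 2 * (c ^ 2 * M))) := by positivity
      omega
    · exact hs
  have hs : s < 2 * M := by
    have hlt : a ^ 2 * (b ^ 2 * (c ^ 2 * s)) < a ^ 2 * (b ^ 2 * (c ^ 2 * (2 * M))) := by
      calc a ^ 2 * (b ^ 2 * (c ^ 2 * s))
          < (a ^ 2 + a + 1) * ((b ^ 2 + b + 1) * ((c ^ 2 + c + 1) * s)) := by
            gcongr <;> omega
        _ = a ^ 2 * (b ^ 2 * (c ^ 2 * (2 * M))) := by rw [h]; ring
    exact lt_of_mul_lt_mul_left (lt_of_mul_lt_mul_left (lt_of_mul_lt_mul_left hlt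
      (Nat.zero_le _)) (Nat.zero_le _)) (Nat.zero_le _)
  have hbound : b < 2 * M → c < 4 * M → a * b * c < 16 * M ^ 3 := fun hb hc =>
    calc a * b * c < 2 * M * (2 * M) * (4 * M) := by
          have : a < 2 * M := hab.trans hb
          gcongr
      _ = 16 * M ^ 3 := by ring
  by_cases hcs : c ∣ s
  · have := Nat.le_of_dvd hs0 hcs
    exact hbound (by omega) (by omega)
  have cancel : ∀ {p x : ℕ}, p.Prime → ¬ p ∣ s → p ^ 2 ∣ x * ((p ^ 2 + p + 1) * s) →
      p ^ 2 ∣ x := fun {p x} hp hps hd => by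
    have hn : ¬ p ∣ (p ^ 2 + p + 1) * s := fun hd =>
      (hp.dvd_mul.1 hd).elim (prime_not_dvd_sq_add_self_add_one hp) hps
    exact (((Nat.Prime.coprime_iff_not_dvd hp).2 hn).pow_left 2).dvd_of_dvd_mul_right hd
  have hcd : c ^ 2 ∣ (a ^ 2 + a + 1) * (b ^ 2 + b + 1) :=
    cancel hcp hcs (by
      rw [mul_assoc, h]
      exact ⟨2 * (a ^ 2 * (b ^ 2 * M)), by ring⟩)
  rcases prime_sq_dvd_mul hcp hcd with h1 | h1 | ⟨h1, h2⟩
  · exact absurd h1 (not_sq_dvd_sq_add_self_add_one ha0 (hab.trans hbc))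
  · exact absurd h1 (not_sq_dvd_sq_add_self_add_one hb0 hbc)
  have hsum := eq_add_add_one_of_dvd hcp hab hbc h1 h2
  by_cases hbs : b ∣ s
  · have := Nat.le_of_dvd hs0 hbs
    exact hbound (by omega) (by omega)
  refine absurd (cancel hbp hbs ?_) (not_sq_dvd_mul_of_eq_add hbp hcp ha0 hab hsum h2)
  refine ⟨2 * (a ^ 2 * (c ^ 2 * M)), ?_⟩
  linear_combination h

/-- Let N be an odd perfect number with at least three distinct
prime divisors, with c, b, a its largest, second largest and third largest
prime divisors. If a² ∥ N, b² ∥ N, and c² ∥ N, then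
abc < 2^(1/3) · 3^(1/18) · N^(17/36). -/
theorem stmt_14 (N : ℕ) (hodd : Odd N) (hperf : Nat.Perfect N)
    (hk : 3 ≤ N.primeFactors.card)
    (a b c : ℕ)
    (ha : a ∈ N.primeFactors) (hb : b ∈ N.primeFactors) (hc : c ∈ N.primeFactors)
    (ha2 : (N.primeFactors.filter (fun q => a < q)).card = 2)
    (hb1 : (N.primeFactors.filter (fun q => b < q)).card = 1)
    (hc0 : (N.primeFactors.filter (fun q => c < q)).card = 0)
    (haN : a ^ 2 ∣ N ∧ ¬ a ^ 3 ∣ N)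
    (hbN : b ^ 2 ∣ N ∧ ¬ b ^ 3 ∣ N)
    (hcN : c ^ 2 ∣ N ∧ ¬ c ^ 3 ∣ N) :
    (a * b * c : ℝ) < (2 : ℝ) ^ ((1 : ℝ) / 3) * (3 : ℝ) ^ ((1 : ℝ) / 18) *
      (N : ℝ) ^ ((17 : ℝ) / 36) := by
  have hap := Nat.prime_of_mem_primeFactors ha
  have hbp := Nat.prime_of_mem_primeFactors hb
  have hcp := Nat.prime_of_mem_primeFactors hc
  have hab : a < b := lt_of_card_filter_lt (by rw [ha2, hb1]; norm_num)
  have hbc : b < c := lt_of_card_filter_lt (by rw [hb1, hc0]; norm_num)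
  have hsig : ArithmeticFunction.sigma 1 N = 2 * N := by
    rw [ArithmeticFunction.sigma_one_apply]
    exact (Nat.perfect_iff_sum_divisors_eq_two_mul hperf.2).1 hperf
  obtain ⟨L, hL, haL⟩ := exists_eq_sq_mul_of_exact haN
  obtain ⟨K, hK, hbK⟩ := exists_eq_sq_mul_of_exact
    (exact_sq_of_exact_prime_sq_mul hbp hap hab.ne' (hL ▸ hbN))
  obtain ⟨M, hM, hcM⟩ := exists_eq_sq_mul_of_exact
    (exact_sq_of_exact_prime_sq_mul hcp hbp hbc.ne'
      (hK ▸ exact_sq_of_exact_prime_sq_mul hcp hap (hab.trans hbc).ne' (hL ▸ hcN)))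
  have hNM : N = a ^ 2 * (b ^ 2 * (c ^ 2 * M)) := by rw [hL, hK, hM]
  have hM0 : 0 < M := Nat.pos_of_ne_zero fun h0 => hcM (h0 ▸ dvd_zero c)
  have habc : a * b * c < 16 * M ^ 3 := by
    refine mul_mul_lt_of_sigma_eq (s := ArithmeticFunction.sigma 1 M) hap hbp hcp hab hbc hM0 ?_
    rw [← sigma_one_prime_sq_mul hcp hcM, ← hM, ← sigma_one_prime_sq_mul hbp hbK, ← hK,
      ← sigma_one_prime_sq_mul hap haL, ← hL, hsig]
  have hpow : (a * b * c) ^ 36 < 2 ^ 12 * 3 ^ 2 * N ^ 17 := by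
    have hx : 0 < a * b * c := Nat.mul_pos (Nat.mul_pos hap.pos hbp.pos) hcp.pos
    calc (a * b * c) ^ 36 = (a * b * c) ^ 34 * (a * b * c) ^ 2 := by ring
      _ < (a * b * c) ^ 34 * (16 * M ^ 3) ^ 2 := by gcongr
      _ = (a * b * c) ^ 34 * (256 * M ^ 6) := by ring
      _ ≤ (a * b * c) ^ 34 * (2 ^ 12 * 3 ^ 2 * M ^ 17) := by
          gcongr <;> norm_num
      _ = 2 ^ 12 * 3 ^ 2 * N ^ 17 := by rw [hNM]; ring
  refine lt_of_pow_lt_pow_left₀ 36 (by positivity) ?_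
  have hrhs : ((2 : ℝ) ^ ((1 : ℝ) / 3) * (3 : ℝ) ^ ((1 : ℝ) / 18) *
      (N : ℝ) ^ ((17 : ℝ) / 36)) ^ 36 = 2 ^ 12 * 3 ^ 2 * (N : ℝ) ^ 17 := by
    rw [mul_pow, mul_pow, ← Real.rpow_mul_natCast (by norm_num),
      ← Real.rpow_mul_natCast (by norm_num), ← Real.rpow_mul_natCast (by positivity),
      ← Real.rpow_natCast 2 12, ← Real.rpow_natCast 3 2, ← Real.rpow_natCast (N : ℝ) 17]
    norm_num
  rw [hrhs]
  exact_mod_cast hpow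
end

section
/- Let N be an odd perfect number with at least two distinct prime divisors, and let b and c denote respectively its second largest and largest prime divisors. If b ∥ N and c² ∥ N, then bc ≤ (2N)^(2/5), i.e., (bc)^5 ≤ (2N)^2. -/
open ArithmeticFunction in
/-- If `b * (c ^ 2 * m)` is perfect, where `b` and `c` are primes coprime to `m` and `b + 1 < c`,
then `c ^ 2 ≤ 2 * m`, because `c ^ 2` divides `σ m`. -/
theorem Nat.Perfect.sq_le_two_mul {b c m : ℕ} (hb : b.Prime) (hc : c.Prime) (hbc : b + 1 < c)
    (hbm : b.Coprime m) (hcm : c.Coprime m) (h : (b * (c ^ 2 * m)).Perfect) :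
    c ^ 2 ≤ 2 * m := by
  have hbc' : b.Coprime c := (Nat.coprime_primes hb hc).2 (by omega)
  have hmpos : 0 < m := by
    rcases Nat.eq_zero_or_pos m with rfl | hm
    · simp [Nat.Perfect] at h
    · exact hm
  have hsum : (b + 1) * ((c ^ 2 + c + 1) * sigma 1 m) = 2 * (b * (c ^ 2 * m)) := by
    have h2 := (Nat.perfect_iff_sum_divisors_eq_two_mul h.2).1 h
    rw [← sigma_one_apply, isMultiplicative_sigma.map_mul_of_coprime
      (Nat.Coprime.mul_right (hbc'.pow_right 2) hbm),
      isMultiplicative_sigma.map_mul_of_coprime (hcm.pow_left 2)] at h2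
    have hsb : sigma 1 b = b + 1 := by
      simpa [Finset.sum_range_succ, add_comm] using sigma_one_apply_prime_pow (i := 1) hb
    have hsc : sigma 1 (c ^ 2) = c ^ 2 + c + 1 := by
      rw [sigma_one_apply_prime_pow hc]
      simp only [Finset.sum_range_succ, Finset.sum_range_zero]
      ring
    rwa [hsb, hsc] at h2
  have hcop_b : c.Coprime (b + 1) :=
    Nat.coprime_of_lt_prime (by omega) hbc hc
  have hcop_c : c.Coprime (c ^ 2 + c + 1) := by
    rw [show c ^ 2 + c + 1 = 1 + c * (c + 1) by ring]
    simp
  have hdvd : c ^ 2 ∣ sigma 1 m := by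
    refine (hcop_c.pow_left 2).dvd_of_dvd_mul_left ((hcop_b.pow_left 2).dvd_of_dvd_mul_left ?_)
    exact ⟨2 * b * m, by rw [hsum]; ring⟩
  have hspos : 0 < sigma 1 m := sigma_pos 1 m hmpos.ne'
  have hle : sigma 1 m ≤ 2 * m := by
    have hpos : 0 < b * c ^ 2 := Nat.mul_pos hb.pos (pow_pos hc.pos 2)
    refine Nat.le_of_mul_le_mul_left ?_ hpos
    calc b * c ^ 2 * sigma 1 m ≤ (b + 1) * (c ^ 2 + c + 1) * sigma 1 m := by
          gcongr <;> omega
      _ = b * c ^ 2 * (2 * m) := by rw [mul_assoc, hsum]; ring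
  exact (Nat.le_of_dvd hspos hdvd).trans hle


/-- Let N be an odd perfect number with at least two distinct
prime divisors, with c its largest and b its second largest prime divisor.
If b ∥ N and c² ∥ N, then bc ≤ (2N)^(2/5), i.e., (bc)^5 ≤ (2N)^2. -/
theorem stmt_18 (N : ℕ) (hodd : Odd N) (hperf : Nat.Perfect N)
    (hk : 2 ≤ N.primeFactors.card)
    (b c : ℕ)
    (hb : b ∈ N.primeFactors) (hc : c ∈ N.primeFactors)
    (hb1 : (N.primeFactors.filter (fun q => b < q)).card = 1)
    (hc0 : (N.primeFactors.filter (fun q => c < q)).card = 0)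
    (hbN : b ∣ N ∧ ¬ b ^ 2 ∣ N)
    (hcN : c ^ 2 ∣ N ∧ ¬ c ^ 3 ∣ N) :
    (b * c) ^ 5 ≤ (2 * N) ^ 2 := by
  obtain ⟨q, hq⟩ := Finset.card_pos.1 (hb1 ▸ Nat.one_pos)
  rw [Finset.mem_filter] at hq
  have hqc : q ≤ c := by
    by_contra! hlt
    exact Finset.notMem_empty q (Finset.card_eq_zero.1 hc0 ▸ Finset.mem_filter.2 ⟨hq.1, hlt⟩)
  have hbp := Nat.prime_of_mem_primeFactors hb
  have hcp := Nat.prime_of_mem_primeFactors hc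
  have hbodd : Odd b := hodd.of_dvd_nat hbN.1
  have hcodd : Odd c := hodd.of_dvd_nat (Nat.dvd_of_mem_primeFactors hc)
  have hlt : b < c := hq.2.trans_le hqc
  have hlt' : b + 1 < c := by
    obtain ⟨x, rfl⟩ := hbodd
    obtain ⟨y, rfl⟩ := hcodd
    omega
  have hcop : b.Coprime (c ^ 2) := ((Nat.coprime_primes hbp hcp).2 hlt.ne).pow_right 2
  obtain ⟨m, rfl⟩ := hcop.mul_dvd_of_dvd_of_dvd hbN.1 hcN.1
  have hbm : b.Coprime m := (Nat.Prime.coprime_iff_not_dvd hbp).2 fun ⟨k, hk⟩ =>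
    hbN.2 ⟨c ^ 2 * k, by rw [hk]; ring⟩
  have hcm : c.Coprime m := (Nat.Prime.coprime_iff_not_dvd hcp).2 fun ⟨k, hk⟩ =>
    hcN.2 ⟨b * k, by rw [hk]; ring⟩
  rw [mul_assoc] at hperf
  have hm := hperf.sq_le_two_mul hbp hcp hlt' hbm hcm
  calc (b * c) ^ 5 = b ^ 2 * c ^ 4 * (b ^ 3 * c) := by ring
    _ ≤ b ^ 2 * c ^ 4 * (c ^ 3 * c) := by gcongr
    _ = b ^ 2 * c ^ 4 * (c ^ 2) ^ 2 := by ring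
    _ ≤ b ^ 2 * c ^ 4 * (2 * m) ^ 2 := by gcongr
    _ = (2 * (b * c ^ 2 * m)) ^ 2 := by ring
end

section
/- Let (s_n) be the sequence defined by s_0 = s_1 = 1 and s_{n+2} · s_n = s_{n+1}² + 1 for all n ≥ 0. If x and y are positive integers with x ≤ y such that x divides y² + 1 and y divides x² + 1, then there exists n ≥ 0 with x = s_n and y = s_{n+1}. -/
/-- Let (s_n) be the sequence with s_0 = s_1 = 1 and
s_{n+2} · s_n = s_{n+1}² + 1 for all n ≥ 0. If x and y are positive integers
with x ≤ y, x ∣ y² + 1 and y ∣ x² + 1, then (x, y) is a pair of consecutive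
terms of the sequence. -/
theorem stmt_19 (s : ℕ → ℕ) (h0 : s 0 = 1) (h1 : s 1 = 1)
    (hrec : ∀ n, s (n + 2) * s n = (s (n + 1)) ^ 2 + 1)
    (x y : ℕ) (hx : 0 < x) (hy : 0 < y) (hxy : x ≤ y)
    (hd1 : x ∣ y ^ 2 + 1) (hd2 : y ∣ x ^ 2 + 1) :
    ∃ n, x = s n ∧ y = s (n + 1) := by
  induction y using Nat.strong_induction_on generalizing x with
  | _ y ih =>
  rcases hxy.eq_or_lt with rfl | hlt
  · have hone : x ∣ 1 := (Nat.dvd_add_right (dvd_pow_self x two_ne_zero)).mp hd1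
    exact ⟨0, by rw [h0]; exact Nat.dvd_one.mp hone, by rw [h1]; exact Nat.dvd_one.mp hone⟩
  obtain ⟨z, hz⟩ := hd2
  have hzpos : 0 < z := Nat.pos_of_ne_zero (by rintro rfl; simp at hz)
  have hzx : z ≤ x := by
    by_contra! h
    nlinarith [Nat.mul_le_mul (Nat.succ_le_of_lt hlt) (Nat.succ_le_of_lt h)]
  have hcop : Nat.Coprime x (y ^ 2) := by
    refine Nat.Coprime.pow_right 2 (Nat.dvd_one.mp ?_)
    have hg : x.gcd y ∣ x ^ 2 + 1 := hz ▸ (Nat.gcd_dvd_right x y).mul_right z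
    exact (Nat.dvd_add_right ((Nat.gcd_dvd_left x y).trans (dvd_pow_self x two_ne_zero))).mp hg
  have hdvd : x ∣ z ^ 2 + 1 := by
    refine hcop.dvd_of_dvd_mul_left ?_
    have he : y ^ 2 * (z ^ 2 + 1) = x * (x ^ 3 + 2 * x) + (y ^ 2 + 1) := by
      have hsq : (y * z) ^ 2 = (x ^ 2 + 1) ^ 2 := by rw [hz]
      linarith
    rw [he]
    exact (dvd_mul_right x _).add hd1
  obtain ⟨n, rfl, rfl⟩ := ih x hlt z hzpos hx hzx ⟨y, by rw [hz, mul_comm]⟩ hdvd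
  exact ⟨n + 1, rfl, Nat.eq_of_mul_eq_mul_right hzpos (by rw [hrec, hz])⟩
end
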